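/- arXiv:1106.0023 — 5 statements merged into one kernel-verified Lean document; each statement's English description precedes it below -/
import Mathlib

section
/- Let π ∈ S_n be a derangement with k excedances, with excedance positions i_1 < ⋯ < i_k and nonexcedance positions j_1 < ⋯ < j_{n−k}, and suppose π(i_l) = n−k+l for all 1 ≤ l ≤ k and π(j_m) = m for all 1 ≤ m ≤ n−k (the condition characterizing totally positive Schubert cells). Define subsets of {1, …, n} by R_1 = {i_1, …, i_k} and R_{ℓ+1} = (R_ℓ \ {ℓ}) ∪ {π^{-1}(ℓ)} for 1 ≤ ℓ ≤ n−1. Then ℓ ∈ R_ℓ for every 1 ≤ ℓ ≤ n; in particular each R_ℓ has exactly k elements, and (R_1, …, R_n) is the Grassmann necklace associated to π. -/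
open scoped BigOperators

/-!
Let `≤ₐ` be the order `a < a + 1 < ⋯ < a - 1` on the cyclic set `Fin n`. Passing from `≤ₐ` to
`≤ₐ₊₁` moves the minimum `a` to the top, so the set of weak excedances `{i | i ≤ₐ π i}` changes by
losing `a` and gaining `π⁻¹ a`. This is the recursion defining `R`, hence `R a = {i | i ≤ₐ π i}`,
which contains `a` because `a` is the minimum of `≤ₐ`.
-/

section grassmannNecklace

variable {n : ℕ}

/-- The Grassmann necklace of the permutation `π` whose fixed points are all decorated as coloops,
in the convention where `π⁻¹ a` replaces `a` in the `a`-th term. That term is the set of weak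
excedances of `π` for the cyclically rotated order `a < a + 1 < ⋯ < a - 1`, which is encoded by
comparing differences with `a` modulo `n`. -/
def grassmannNecklace (π : Equiv.Perm (Fin n)) (a : Fin n) : Finset (Fin n) :=
  {i | i - a ≤ π i - a}

theorem mem_grassmannNecklace {π : Equiv.Perm (Fin n)} {a i : Fin n} :
    i ∈ grassmannNecklace π a ↔ i - a ≤ π i - a :=
  Finset.mem_filter_univ i

variable [NeZero n]

theorem fin_induction_add_one {p : Fin n → Prop} (zero : p 0)
    (add_one : ∀ m : Fin n, (m : ℕ) + 1 < n → p m → p (m + 1)) (m : Fin n) : p m := by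
  obtain ⟨n, rfl⟩ := Nat.exists_eq_succ_of_ne_zero (NeZero.ne n)
  induction m using Fin.induction with
  | zero => exact zero
  | succ m ih => simpa only [Fin.coeSucc_eq_succ] using add_one m.castSucc (by simp) ih

theorem fin_sub_one_le_sub_one_iff {x y : Fin n} :
    x - 1 ≤ y - 1 ↔ y = 0 ∨ x ≠ 0 ∧ x ≤ y := by
  obtain ⟨n, rfl⟩ := Nat.exists_eq_succ_of_ne_zero (NeZero.ne n)
  simp only [Fin.le_def, Fin.coe_sub_one]
  split_ifs <;> grind

theorem grassmannNecklace_zero (π : Equiv.Perm (Fin n)) :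
    grassmannNecklace π 0 = Finset.univ.filter fun i => i ≤ π i := by
  simp only [grassmannNecklace, sub_zero]

theorem self_mem_grassmannNecklace (π : Equiv.Perm (Fin n)) (a : Fin n) :
    a ∈ grassmannNecklace π a := by
  rw [mem_grassmannNecklace, sub_self]
  exact Fin.zero_le _

theorem grassmannNecklace_add_one (π : Equiv.Perm (Fin n)) (a : Fin n) :
    grassmannNecklace π (a + 1) = insert (π⁻¹ a) (grassmannNecklace π a \ {a}) := by
  ext i
  rw [mem_grassmannNecklace, ← sub_sub, ← sub_sub, fin_sub_one_le_sub_one_iff, sub_eq_zero,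
    sub_ne_zero, Finset.mem_insert, Equiv.Perm.eq_inv_iff_eq, Finset.mem_sdiff,
    mem_grassmannNecklace, Finset.mem_singleton, and_comm (a := i ≠ a)]

theorem inv_notMem_grassmannNecklace_sdiff (π : Equiv.Perm (Fin n)) (a : Fin n) :
    π⁻¹ a ∉ grassmannNecklace π a \ {a} := by
  rw [Finset.mem_sdiff, mem_grassmannNecklace, Equiv.Perm.inv_def, Equiv.apply_symm_apply,
    sub_self, nonpos_iff_eq_zero, sub_eq_zero, Finset.mem_singleton]
  exact and_not_self

theorem card_grassmannNecklace_add_one (π : Equiv.Perm (Fin n)) (a : Fin n) :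
    (grassmannNecklace π (a + 1)).card = (grassmannNecklace π a).card := by
  rw [grassmannNecklace_add_one,
    Finset.card_insert_of_notMem (inv_notMem_grassmannNecklace_sdiff π a),
    Finset.sdiff_singleton_eq_erase,
    Finset.card_erase_add_one (self_mem_grassmannNecklace π a)]

theorem card_grassmannNecklace (π : Equiv.Perm (Fin n)) (a : Fin n) :
    (grassmannNecklace π a).card = (Finset.univ.filter fun i => i ≤ π i).card := by
  induction a using fin_induction_add_one with
  | zero => rw [grassmannNecklace_zero]
  | add_one a _ ih => rw [card_grassmannNecklace_add_one, ih]

theorem eq_grassmannNecklace_of_add_one {R : Fin n → Finset (Fin n)}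
    (zero : R 0 = Finset.univ.filter fun i => i ≤ π i)
    (add_one : ∀ m : Fin n, (m : ℕ) + 1 < n → R (m + 1) = insert (π⁻¹ m) (R m \ {m})) :
    R = grassmannNecklace π := by
  funext a
  induction a using fin_induction_add_one with
  | zero => rw [zero, grassmannNecklace_zero]
  | add_one a ha ih => rw [add_one a ha, ih, grassmannNecklace_add_one]

theorem tp_schubert_necklace_general {k : ℕ} (π : Equiv.Perm (Fin n))
    (hE : (Finset.univ.filter fun i : Fin n => i ≤ π i).card = k)
    (R : Fin n → Finset (Fin n))
    (hR0 : R 0 = Finset.univ.filter fun i : Fin n => i ≤ π i)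
    (hRstep : ∀ m : Fin n, (m : ℕ) + 1 < n →
      R (m + 1) = insert (π⁻¹ m) (R m \ {m})) :
    (∀ m : Fin n, m ∈ R m) ∧ (∀ m : Fin n, (R m).card = k) := by
  obtain rfl := eq_grassmannNecklace_of_add_one hR0 hRstep
  exact ⟨self_mem_grassmannNecklace π, fun m => (card_grassmannNecklace π m).trans hE⟩

end grassmannNecklace

/-- let `π` be a derangement of `{1,…,n}` (here `Fin n`, 0-indexed) with `k`
excedances, satisfying the TP Schubert cell condition: the excedance positions
`i_1 < ⋯ < i_k` have `π(i_l) = n−k+l` and the nonexcedance positions `j_1 < ⋯ < j_{n−k}`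
have `π(j_m) = m` (stated 0-indexed below).  Define `R 0` to be the set of excedance
positions and `R (m+1) = (R m \ {m}) ∪ {π⁻¹ m}`.  Then `m ∈ R m` for all `m`; in
particular every `R m` has exactly `k` elements (so `(R 0, …, R (n-1))` is the Grassmann
necklace associated to `π`). -/
theorem tp_schubert_necklace {n k : ℕ} [NeZero n] (π : Equiv.Perm (Fin n))
    (hder : ∀ i : Fin n, π i ≠ i)
    (hE : (Finset.univ.filter fun i : Fin n => i < π i).card = k)
    (hN : (Finset.univ.filter fun i : Fin n => π i < i).card = n - k)
    (hexc : ∀ l : Fin k,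
      (π (((Finset.univ.filter fun i : Fin n => i < π i).orderIsoOfFin hE l : Fin n)) : ℕ)
        = n - k + l)
    (hnon : ∀ m : Fin (n - k),
      (π (((Finset.univ.filter fun i : Fin n => π i < i).orderIsoOfFin hN m : Fin n)) : ℕ)
        = m)
    (R : Fin n → Finset (Fin n))
    (hR0 : R 0 = Finset.univ.filter fun i : Fin n => i < π i)
    (hRstep : ∀ m : Fin n, (m : ℕ) + 1 < n →
      R (m + 1) = insert (π⁻¹ m) (R m \ {m})) :
    (∀ m : Fin n, m ∈ R m) ∧ (∀ m : Fin n, (R m).card = k) := by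
  have excedance_iff (i : Fin n) : i < π i ↔ i ≤ π i := (hder i).symm.le_iff_lt.symm
  simp only [excedance_iff] at hE hR0
  exact tp_schubert_necklace_general π hE R hR0 hRstep
end

section
/- Let π ∈ S_n be a derangement with k excedances, with excedance positions i_1 < ⋯ < i_k and nonexcedance positions j_1 < ⋯ < j_{n−k}, and suppose π(i_l) = n−k+l for all 1 ≤ l ≤ k and π(j_m) = m for all 1 ≤ m ≤ n−k. Define R_1 = {i_1, …, i_k} and R_{ℓ+1} = (R_ℓ \ {ℓ}) ∪ {π^{-1}(ℓ)} for 1 ≤ ℓ ≤ n−1. Then R_{n−k+1} = {π(i_1), …, π(i_k)} = {n−k+1, n−k+2, …, n}. -/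
open scoped BigOperators

/-!
For a derangement `π`, the necklace set `R m` consists of the excedances of `π` relative to the
rotated order `m < m + 1 < ⋯ < n - 1 < 0 < ⋯ < m - 1`: passing from `m` to `m + 1` turns the
minimum `m` into the maximum, so `m` stops being an excedance and `π⁻¹ m` becomes one.
The `k` excedance values of `π` lie among the `k` elements `≥ t = n - k`, so they exhaust them. In
the order rotated to start at `t`, a position `i ≥ t` is then an excedance, either because `π i ≥ t`
and `i < π i`, or because `π i < t` lies beyond the wrap-around; positions `i < t` never are.
-/

theorem image_eq_Ici_of_card {n : ℕ} {α : Type*} {s : Finset α} {f : α → Fin n} {t : Fin n}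
    (hf : Set.InjOn f s) (hcard : s.card = n - t) (hle : ∀ a ∈ s, t ≤ f a) :
    s.image f = Finset.Ici t := by
  apply Finset.eq_of_subset_of_card_le
  · simpa [Finset.subset_iff] using hle
  · rw [Finset.card_image_of_injOn hf, hcard, Fin.card_Ici]

theorem forall_orderIsoOfFin_iff {α : Type*} [LinearOrder α] {s : Finset α} {k : ℕ}
    (h : s.card = k) {p : α → Prop} :
    (∀ l : Fin k, p (s.orderIsoOfFin h l)) ↔ ∀ a ∈ s, p a :=
  ((s.orderIsoOfFin h).surjective.forall (p := fun a : s => p a)).symm.trans Subtype.forall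

section Rotation

variable {n : ℕ}

theorem fin_sub_lt_sub_iff (m i j : Fin n) :
    i - m < j - m ↔ m ≤ i ∧ (i < j ∨ j < m) ∨ i < j ∧ j < m := by
  have val_sub (a : Fin n) :
      m ≤ a ∧ (a - m).val = a - m ∨ a < m ∧ (a - m).val = n + a - m :=
    (le_or_gt m a).imp (fun h => ⟨h, Fin.coe_sub_iff_le.mpr h⟩)
      (fun h => ⟨h, Fin.coe_sub_iff_lt.mpr h⟩)
  have hi := val_sub i
  have hj := val_sub j
  simp only [Fin.lt_def, Fin.le_def] at *
  omega

theorem fin_sub_one_lt_sub_one_iff [NeZero n] (a b : Fin n) :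
    a - 1 < b - 1 ↔ a ≠ 0 ∧ (b = 0 ∨ a < b) := by
  obtain ⟨n, rfl⟩ := Nat.exists_eq_succ_of_ne_zero (NeZero.ne n)
  simp only [Fin.lt_def, Fin.coe_sub_one, ne_eq, Fin.ext_iff, Fin.val_zero]
  split_ifs <;> omega

end Rotation

/-- The excedances of `π` relative to the rotated order `m < m + 1 < ⋯ < n - 1 < 0 < ⋯ < m - 1` on
`Fin n`, which compares `i` and `j` through the cyclic differences `i - m` and `j - m`. These are
the sets of the Grassmann necklace of a derangement. -/
def rotatedExcedances {n : ℕ} (π : Equiv.Perm (Fin n)) (m : Fin n) : Finset (Fin n) :=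
  Finset.univ.filter fun i => i - m < π i - m

section Necklace

variable {n : ℕ} {π : Equiv.Perm (Fin n)}

theorem mem_rotatedExcedances {m i : Fin n} :
    i ∈ rotatedExcedances π m ↔ i - m < π i - m := by
  simp [rotatedExcedances]

theorem rotatedExcedances_zero [NeZero n] :
    rotatedExcedances π 0 = Finset.univ.filter fun i => i < π i := by
  simp [rotatedExcedances]

theorem rotatedExcedances_add_one [NeZero n] {m : Fin n} (hm : π m ≠ m) :
    rotatedExcedances π (m + 1) = insert (π⁻¹ m) (rotatedExcedances π m \ {m}) := by
  ext i
  have ne_of_map_eq : π i = m → i ≠ m := by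
    rintro hi rfl
    exact hm hi
  rw [mem_rotatedExcedances, ← sub_sub, ← sub_sub, fin_sub_one_lt_sub_one_iff, sub_ne_zero,
    sub_eq_zero, Finset.mem_insert, Finset.mem_sdiff, Finset.mem_singleton, mem_rotatedExcedances,
    Equiv.Perm.eq_inv_iff_eq]
  tauto

theorem necklace_eq_rotatedExcedances [NeZero n] (hder : ∀ i, π i ≠ i)
    {R : Fin n → Finset (Fin n)} (hR0 : R 0 = Finset.univ.filter fun i => i < π i)
    (hRstep : ∀ m : Fin n, (m : ℕ) + 1 < n → R (m + 1) = insert (π⁻¹ m) (R m \ {m}))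
    (m : Fin n) : R m = rotatedExcedances π m := by
  obtain ⟨n, rfl⟩ := Nat.exists_eq_succ_of_ne_zero (NeZero.ne n)
  induction m using Fin.induction with
  | zero => exact hR0.trans rotatedExcedances_zero.symm
  | succ m ih =>
    rw [← Fin.coeSucc_eq_succ, hRstep _ (Nat.succ_lt_succ m.isLt), ih,
      rotatedExcedances_add_one (hder _)]

theorem rotatedExcedances_eq_Ici {t : Fin n}
    (himage : (Finset.univ.filter fun i => i < π i).image π = Finset.Ici t) :
    rotatedExcedances π t = Finset.Ici t := by
  have exc_iff (i : Fin n) : i < π i ↔ t ≤ π i := by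
    rw [← Finset.mem_Ici, ← himage, π.injective.mem_finset_image, Finset.mem_filter_univ]
  ext i
  rw [mem_rotatedExcedances, fin_sub_lt_sub_iff, Finset.mem_Ici, exc_iff,
    and_iff_left (le_or_gt t (π i)), or_iff_left fun h => h.1.not_gt h.2]

end Necklace

theorem tp_schubert_necklace_middle_general {n k : ℕ} [NeZero n]
    (hk : 0 < k) (π : Equiv.Perm (Fin n)) (hder : ∀ i : Fin n, π i ≠ i)
    (hE : (Finset.univ.filter fun i : Fin n => i < π i).card = k)
    (hexc : ∀ i : Fin n, i < π i → n - k ≤ (π i : ℕ))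
    (R : Fin n → Finset (Fin n))
    (hR0 : R 0 = Finset.univ.filter fun i : Fin n => i < π i)
    (hRstep : ∀ m : Fin n, (m : ℕ) + 1 < n →
      R (m + 1) = insert (π⁻¹ m) (R m \ {m})) :
    R ⟨n - k, Nat.sub_lt (NeZero.pos n) hk⟩ =
        (Finset.univ.filter fun i : Fin n => i < π i).image π ∧
    (Finset.univ.filter fun i : Fin n => i < π i).image π =
        Finset.univ.filter fun x : Fin n => n - k ≤ (x : ℕ) := by
  have hkn : k ≤ n := hE ▸ card_finset_fin_le _
  set t : Fin n := ⟨n - k, Nat.sub_lt (NeZero.pos n) hk⟩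
  have hcard : (Finset.univ.filter fun i => i < π i).card = n - t :=
    hE.trans (Nat.sub_sub_self hkn).symm
  have himage : (Finset.univ.filter fun i => i < π i).image π = Finset.Ici t :=
    image_eq_Ici_of_card π.injective.injOn hcard fun i hi =>
      hexc i ((Finset.mem_filter_univ i).mp hi)
  constructor
  · rw [necklace_eq_rotatedExcedances hder hR0 hRstep, rotatedExcedances_eq_Ici himage, himage]
  · rw [himage]
    ext x
    simp [t, Fin.le_def]

/-- with `π` a derangement of `Fin n` (0-indexed) with `k` excedances
satisfying the TP Schubert cell condition, and the Grassmann necklace `R` defined by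
`R 0 = ` excedance positions, `R (m+1) = (R m \ {m}) ∪ {π⁻¹ m}`, one has
`R (n−k) = π(excedance positions) = {n−k, n−k+1, …, n−1}` (0-indexed version of
`R_{n−k+1} = {π(i_1),…,π(i_k)} = {n−k+1,…,n}`). -/
theorem tp_schubert_necklace_middle {n k : ℕ} [NeZero n]
    (hk : 0 < k) (hkn : k < n) (π : Equiv.Perm (Fin n))
    (hder : ∀ i : Fin n, π i ≠ i)
    (hE : (Finset.univ.filter fun i : Fin n => i < π i).card = k)
    (hN : (Finset.univ.filter fun i : Fin n => π i < i).card = n - k)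
    (hexc : ∀ l : Fin k,
      (π (((Finset.univ.filter fun i : Fin n => i < π i).orderIsoOfFin hE l : Fin n)) : ℕ)
        = n - k + l)
    (hnon : ∀ m : Fin (n - k),
      (π (((Finset.univ.filter fun i : Fin n => π i < i).orderIsoOfFin hN m : Fin n)) : ℕ)
        = m)
    (R : Fin n → Finset (Fin n))
    (hR0 : R 0 = Finset.univ.filter fun i : Fin n => i < π i)
    (hRstep : ∀ m : Fin n, (m : ℕ) + 1 < n →
      R (m + 1) = insert (π⁻¹ m) (R m \ {m})) :
    R ⟨n - k, by omega⟩ =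
        (Finset.univ.filter fun i : Fin n => i < π i).image π ∧
    (Finset.univ.filter fun i : Fin n => i < π i).image π =
        Finset.univ.filter fun x : Fin n => n - k ≤ (x : ℕ) := by
  have hle : ∀ i ∈ Finset.univ.filter fun i => i < π i, n - k ≤ (π i : ℕ) :=
    (forall_orderIsoOfFin_iff hE).mp fun l => Nat.le.intro (hexc l).symm
  exact tp_schubert_necklace_middle_general hk π hder hE
    (fun i hi => hle i ((Finset.mem_filter_univ i).mpr hi)) R hR0 hRstep
end

section
/- Let A be a real k×n matrix with k ≥ 2, let 1 ≤ h < i < j < ℓ ≤ n, and let S be a (k−2)-element subset of {1, …, n} disjoint from {h, i, j, ℓ}. If Δ_{S∪{h,i}}(A) = 0 or Δ_{S∪{j,ℓ}}(A) = 0, then Δ_{S∪{h,ℓ}}(A) · Δ_{S∪{i,j}}(A) = Δ_{S∪{h,j}}(A) · Δ_{S∪{i,ℓ}}(A). -/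
open scoped BigOperators

/-- The maximal minor of a `k × n` matrix `A` on the column set `I` (columns taken in
increasing order); defined to be `0` if `I` does not have exactly `k` elements. -/
noncomputable def minor {k n : ℕ} (A : Matrix (Fin k) (Fin n) ℝ) (I : Finset (Fin n)) : ℝ :=
  if hc : I.card = k then
    Matrix.det (Matrix.of fun r c : Fin k => A r ((I.orderIsoOfFin hc c : Fin n)))
  else 0

/-!
Cramer's rule writes a column `c` in terms of the columns `a, b, s₁, …, sₘ` of a square matrix,
with brackets as coefficients. Substituting this expression into `[c, d, s]` kills every term
in which some `sₜ` appears twice and leaves `[a, b, s] [c, d, s] = [a, c, s] [b, d, s] -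
[a, d, s] [b, c, s]`. Sorting a column set `S ∪ {a, b}` with `a < b` costs the sign `ε a * ε b`,
where `ε x = (-1) ^ #{y ∈ S | y < x}`, so all three products acquire the same sign
`ε a * ε b * ε c * ε d` and the relation holds for minors of increasing column sets. If the product
on the left vanishes, the two products on the right coincide.
-/

section Bracket

variable {R κ ι : Type*} [CommRing R] [Fintype κ] [DecidableEq κ] {m : ℕ}

theorem det_mul_det_eq_sum_exchange (A B : Matrix κ κ R) (k : κ) :
    A.det * B.det =
      ∑ i, (A.updateCol i (B.col k)).det * (B.updateCol k (A.col i)).det := by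
  have expansion : A.det • B.col k = ∑ i, A.cramer (B.col k) i • A.col i := by
    rw [← Matrix.mulVec_cramer, Matrix.mulVec_eq_sum]
    simp only [op_smul_eq_smul]
    rfl
  calc
    A.det * B.det = B.cramer (A.det • B.col k) k := by
      rw [map_smul, Pi.smul_apply, smul_eq_mul, Matrix.cramer_apply]
      congr 2
      exact (Matrix.updateCol_eq_self B k).symm
    _ = ∑ i, A.cramer (B.col k) i * B.cramer (A.col i) k := by
      rw [expansion, map_sum, Finset.sum_apply]
      simp only [map_smul, Pi.smul_apply, smul_eq_mul]

/-- The Plücker bracket `[I]` of a matrix: the determinant formed by the columns listed by the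
tuple `I`, in that order and possibly with repetition. Unlike the minor of a column *set*, it is
alternating in its entries. -/
def pluckerBracket (A : Matrix κ ι R) (I : κ → ι) : R :=
  (A.submatrix id I).det

theorem pluckerBracket_eq_zero_of_eq (A : Matrix κ ι R) {I : κ → ι} {i j : κ} (hij : i ≠ j)
    (hI : I i = I j) : pluckerBracket A I = 0 :=
  Matrix.det_zero_of_column_eq hij fun r => congrArg (A r) hI

theorem pluckerBracket_comp_perm (A : Matrix κ ι R) (I : κ → ι) (σ : Equiv.Perm κ) :
    pluckerBracket A (I ∘ σ) = Equiv.Perm.sign σ * pluckerBracket A I :=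
  Matrix.det_permute' σ (A.submatrix id I)

theorem pluckerBracket_mul_pluckerBracket (A : Matrix κ ι R) (I J : κ → ι) (k : κ) :
    pluckerBracket A I * pluckerBracket A J =
      ∑ i, pluckerBracket A (Function.update I i (J k)) *
        pluckerBracket A (Function.update J k (I i)) := by
  have update_col (L : κ → ι) (i : κ) (c : ι) :
      (A.submatrix id L).updateCol i (A.col c) = A.submatrix id (Function.update L i c) := by
    ext r j
    by_cases hj : j = i <;> simp [hj]
  simp only [pluckerBracket, ← update_col]
  exact det_mul_det_eq_sum_exchange (A.submatrix id I) (A.submatrix id J) k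

theorem pluckerBracket_insertNth (A : Matrix (Fin (m + 1)) ι R) (p : Fin (m + 1)) (a : ι)
    (s : Fin m → ι) :
    pluckerBracket A (p.insertNth a s) = (-1) ^ (p : ℕ) * pluckerBracket A (Fin.cons a s) := by
  rw [← Fin.cons_comp_cycleRange, pluckerBracket_comp_perm, Fin.sign_cycleRange]
  simp

theorem pluckerBracket_cons_cons_swap (A : Matrix (Fin (m + 2)) ι R) (a b : ι) (s : Fin m → ι) :
    pluckerBracket A (Fin.cons a (Fin.cons b s)) =
      -pluckerBracket A (Fin.cons b (Fin.cons a s)) := by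
  rw [← Fin.insertNth_zero' b s, ← Fin.insertNth_succ_cons, pluckerBracket_insertNth]
  simp

theorem pluckerBracket_cons_insertNth (A : Matrix (Fin (m + 2)) ι R) (p : Fin (m + 1)) (a b : ι)
    (s : Fin m → ι) :
    pluckerBracket A (Fin.cons a (p.insertNth b s)) =
      (-1) ^ (p : ℕ) * pluckerBracket A (Fin.cons a (Fin.cons b s)) := by
  rw [← Fin.insertNth_succ_cons, pluckerBracket_insertNth, pluckerBracket_cons_cons_swap,
    Fin.val_succ, pow_succ]
  ring

theorem pluckerBracket_three_term (A : Matrix (Fin (m + 2)) ι R) (a b c d : ι) (s : Fin m → ι) :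
    pluckerBracket A (Fin.cons a (Fin.cons b s)) * pluckerBracket A (Fin.cons c (Fin.cons d s)) =
      pluckerBracket A (Fin.cons a (Fin.cons c s)) *
          pluckerBracket A (Fin.cons b (Fin.cons d s)) -
        pluckerBracket A (Fin.cons a (Fin.cons d s)) *
          pluckerBracket A (Fin.cons b (Fin.cons c s)) := by
  have repeated (t : Fin m) : pluckerBracket A (Fin.cons (s t) (Fin.cons d s)) = 0 :=
    pluckerBracket_eq_zero_of_eq A (i := 0) (j := t.succ.succ) (Fin.succ_ne_zero _).symm rfl
  rw [pluckerBracket_mul_pluckerBracket A _ _ 0, Fin.sum_univ_succ, Fin.sum_univ_succ]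
  simp only [Fin.cons_zero, Fin.cons_succ, Fin.update_cons_zero, ← Fin.cons_update, repeated,
    mul_zero, Finset.sum_const_zero, add_zero]
  rw [pluckerBracket_cons_cons_swap A c b]
  ring

end Bracket

section SortedMinor

variable {R ι : Type*} [CommRing R] [LinearOrder ι] {k m : ℕ}

theorem card_filter_lt_orderEmbOfFin (T : Finset ι) (hT : T.card = k) (p : Fin k) :
    {x ∈ T | x < T.orderEmbOfFin hT p}.card = (p : ℕ) := by
  have filter_eq : {x ∈ T | x < T.orderEmbOfFin hT p} =
      (Finset.Iio p).map (T.orderEmbOfFin hT).toEmbedding := by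
    conv_lhs => enter [2]; rw [← T.map_orderEmbOfFin_univ hT]
    rw [Finset.filter_map]
    congr 1
    ext q
    simp
  rw [filter_eq, Finset.card_map, Fin.card_Iio]

theorem exists_orderEmbOfFin_insert_eq_insertNth {T : Finset ι} {a : ι}
    (hT : T.card = m) (haT : (insert a T).card = m + 1) :
    ∃ p : Fin (m + 1), (p : ℕ) = {x ∈ T | x < a}.card ∧
      ⇑((insert a T).orderEmbOfFin haT) = p.insertNth a (T.orderEmbOfFin hT) := by
  set e := (insert a T).orderEmbOfFin haT with he
  obtain ⟨p, hp⟩ : a ∈ Set.range e := by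
    rw [he, Finset.range_orderEmbOfFin]
    exact Finset.mem_insert_self a T
  refine ⟨p, ?_, Fin.eq_insertNth_iff.2 ⟨hp, Finset.orderEmbOfFin_unique hT (fun q => ?_) ?_⟩⟩
  · rw [← card_filter_lt_orderEmbOfFin (insert a T) haT p, ← he, hp, Finset.filter_insert,
      if_neg (lt_irrefl a)]
  · have mem_insert : e (p.succAbove q) ∈ insert a T := Finset.orderEmbOfFin_mem _ _ _
    refine Finset.mem_of_mem_insert_of_ne mem_insert fun h => ?_
    exact p.succAbove_ne q (e.injective (h.trans hp.symm))
  · exact e.strictMono.comp p.strictMono_succAbove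

/-- The maximal minor of a matrix on the column set `I`, columns taken in increasing order. It
extends `minor` to commutative rings and linearly ordered column indices, with the same value `0`
on sets of the wrong cardinality. -/
def sortedMinor (A : Matrix (Fin k) ι R) (I : Finset ι) : R :=
  if hI : I.card = k then pluckerBracket A (I.orderEmbOfFin hI) else 0

theorem sortedMinor_insert_insert (A : Matrix (Fin (m + 2)) ι R) {S : Finset ι} (hS : S.card = m)
    {a b : ι} (hab : a < b) (ha : a ∉ S) (hb : b ∉ S) :
    sortedMinor A (insert a (insert b S)) =
      (-1) ^ {x ∈ S | x < a}.card * (-1) ^ {x ∈ S | x < b}.card *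
        pluckerBracket A (Fin.cons a (Fin.cons b (S.orderEmbOfFin hS))) := by
  have a_notMem : a ∉ insert b S := by simp [hab.ne, ha]
  have card_insert : (insert b S).card = m + 1 := by rw [Finset.card_insert_of_notMem hb, hS]
  have card_insert_insert : (insert a (insert b S)).card = m + 2 := by
    rw [Finset.card_insert_of_notMem a_notMem, card_insert]
  obtain ⟨p, hp, insert_a⟩ :=
    exists_orderEmbOfFin_insert_eq_insertNth card_insert card_insert_insert
  obtain ⟨q, hq, insert_b⟩ := exists_orderEmbOfFin_insert_eq_insertNth hS card_insert
  rw [Finset.filter_insert, if_neg hab.not_gt] at hp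
  rw [sortedMinor, dif_pos card_insert_insert, insert_a, insert_b, pluckerBracket_insertNth,
    pluckerBracket_cons_insertNth, hp, hq, mul_assoc]

theorem sortedMinor_three_term (A : Matrix (Fin k) ι R) {S : Finset ι} (hS : S.card + 2 = k)
    {a b c d : ι} (hab : a < b) (hbc : b < c) (hcd : c < d)
    (ha : a ∉ S) (hb : b ∉ S) (hc : c ∉ S) (hd : d ∉ S) :
    sortedMinor A (insert a (insert b S)) * sortedMinor A (insert c (insert d S)) =
      sortedMinor A (insert a (insert c S)) * sortedMinor A (insert b (insert d S)) -
        sortedMinor A (insert a (insert d S)) * sortedMinor A (insert b (insert c S)) := by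
  subst hS
  rw [sortedMinor_insert_insert A rfl hab ha hb, sortedMinor_insert_insert A rfl hcd hc hd,
    sortedMinor_insert_insert A rfl (hab.trans hbc) ha hc,
    sortedMinor_insert_insert A rfl (hbc.trans hcd) hb hd,
    sortedMinor_insert_insert A rfl (hab.trans (hbc.trans hcd)) ha hd,
    sortedMinor_insert_insert A rfl hbc hb hc]
  linear_combination (-1) ^ {x ∈ S | x < a}.card * (-1) ^ {x ∈ S | x < b}.card *
    (-1) ^ {x ∈ S | x < c}.card * (-1) ^ {x ∈ S | x < d}.card *
    pluckerBracket_three_term A a b c d (S.orderEmbOfFin rfl)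

theorem two_term_plucker_case2_general (A : Matrix (Fin k) ι R) {S : Finset ι}
    (hS : S.card + 2 = k) {h i j l : ι} (hhi : h < i) (hij : i < j) (hjl : j < l)
    (hSh : h ∉ S) (hSi : i ∉ S) (hSj : j ∉ S) (hSl : l ∉ S)
    (hzero : sortedMinor A (insert h (insert i S)) = 0 ∨
      sortedMinor A (insert j (insert l S)) = 0) :
    sortedMinor A (insert h (insert l S)) * sortedMinor A (insert i (insert j S)) =
      sortedMinor A (insert h (insert j S)) * sortedMinor A (insert i (insert l S)) := by
  have product_zero :
      sortedMinor A (insert h (insert i S)) * sortedMinor A (insert j (insert l S)) = 0 :=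
    hzero.elim (mul_eq_zero_of_left · _) (mul_eq_zero_of_right _)
  rw [sortedMinor_three_term A hS hhi hij hjl hSh hSi hSj hSl] at product_zero
  exact (sub_eq_zero.1 product_zero).symm

end SortedMinor

theorem minor_eq_sortedMinor {k n : ℕ} (A : Matrix (Fin k) (Fin n) ℝ) :
    minor A = sortedMinor A :=
  rfl

/-- if `h < i < j < ℓ`, `S` is a `(k−2)`-subset disjoint from `{h,i,j,ℓ}`, and
`Δ_{S∪{h,i}}(A) = 0` or `Δ_{S∪{j,ℓ}}(A) = 0`, then
`Δ_{S∪{h,ℓ}}(A) Δ_{S∪{i,j}}(A) = Δ_{S∪{h,j}}(A) Δ_{S∪{i,ℓ}}(A)`. -/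
theorem two_term_plucker_case2 {k n : ℕ} (hk : 2 ≤ k)
    (A : Matrix (Fin k) (Fin n) ℝ)
    (h i j l : Fin n) (hhi : h < i) (hij : i < j) (hjl : j < l)
    (S : Finset (Fin n)) (hS : S.card = k - 2)
    (hSh : h ∉ S) (hSi : i ∉ S) (hSj : j ∉ S) (hSl : l ∉ S)
    (hzero : minor A (insert h (insert i S)) = 0 ∨ minor A (insert j (insert l S)) = 0) :
    minor A (insert h (insert l S)) * minor A (insert i (insert j S)) =
      minor A (insert h (insert j S)) * minor A (insert i (insert l S)) := by
  rw [minor_eq_sortedMinor] at hzero ⊢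
  exact two_term_plucker_case2_general A (by omega) hhi hij hjl hSh hSi hSj hSl hzero
end

section
/- Let A be a real k×n matrix with k ≥ 2 all of whose k×k minors are nonnegative, let 1 ≤ h < i < j < ℓ ≤ n, and let S be a (k−2)-element subset of {1, …, n} disjoint from {h, i, j, ℓ}. If Δ_{S∪{h,j}}(A) = 0 or Δ_{S∪{i,ℓ}}(A) = 0, then both Δ_{S∪{h,ℓ}}(A) · Δ_{S∪{i,j}}(A) = 0 and Δ_{S∪{h,i}}(A) · Δ_{S∪{j,ℓ}}(A) = 0. (In particular, the configuration of Case 3 of the X-crossing theorem is impossible for points of the totally nonnegative Grassmannian with all four incident Plücker coordinates nonzero.) -/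
open scoped BigOperators

/-!
Cramer's rule writes a column of one square matrix in terms of the columns of another; applying the
determinant to this expansion gives the Plücker exchange relation. For the columns `h, j, S` and
`i, l, S` all terms but two repeat a column of `S`, and sorting the columns multiplies all remaining
products by the same sign, since the inversions of `h, i, j, l` against `S` contribute the same
factor to each. Hence `Δ_hj Δ_il = Δ_hl Δ_ij + Δ_hi Δ_jl`, and a vanishing sum of nonnegative terms
has vanishing terms.
-/

lemma submatrix_id_updateCol_col {ι κ α R : Type*} [DecidableEq κ] (A : Matrix ι α R) (f : κ → α)
    (i : κ) (a : α) :
    (A.submatrix id f).updateCol i (A.col a) = A.submatrix id (Function.update f i a) := by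
  ext r c
  rcases eq_or_ne c i with rfl | hc <;> simp [*]

section Exchange

variable {ι α R : Type*} [Fintype ι] [DecidableEq ι] [CommRing R]

lemma det_mul_det_eq_sum_updateCol (A B : Matrix ι ι R) (k : ι) :
    A.det * B.det = ∑ i, (A.updateCol i (B.col k)).det * (B.updateCol k (A.col i)).det := by
  have cramer_rule : A.det • B.col k = ∑ i, (A.updateCol i (B.col k)).det • A.col i := by
    rw [← Matrix.mulVec_cramer]
    ext r
    simp [Matrix.mulVec, dotProduct, Matrix.cramer_apply, mul_comm]
  calc A.det * B.det
      = B.cramer (A.det • B.col k) k := by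
        rw [map_smul, Pi.smul_apply, smul_eq_mul, Matrix.cramer_apply]
        exact congrArg (fun M => A.det * M.det) (B.updateCol_eq_self k).symm
    _ = ∑ i, (A.updateCol i (B.col k)).det * (B.updateCol k (A.col i)).det := by
        rw [cramer_rule]
        simp only [map_sum, map_smul, Finset.sum_apply, Pi.smul_apply, smul_eq_mul]
        rfl

lemma plucker_exchange (A : Matrix ι α R) (f g : ι → α) (k : ι) :
    (A.submatrix id f).det * (A.submatrix id g).det =
      ∑ i, (A.submatrix id (Function.update f i (g k))).det *
        (A.submatrix id (Function.update g k (f i))).det := by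
  simp only [← submatrix_id_updateCol_col]
  exact det_mul_det_eq_sum_updateCol _ _ k

lemma plucker_three_term {m : ℕ} (A : Matrix (Fin (m + 2)) α R) (s : Fin m → α) (x y z w : α) :
    (A.submatrix id (Fin.cons x (Fin.cons y s))).det *
        (A.submatrix id (Fin.cons z (Fin.cons w s))).det =
      (A.submatrix id (Fin.cons z (Fin.cons y s))).det *
          (A.submatrix id (Fin.cons x (Fin.cons w s))).det +
        (A.submatrix id (Fin.cons x (Fin.cons z s))).det *
          (A.submatrix id (Fin.cons y (Fin.cons w s))).det := by
  have repeated_column (c : Fin m) :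
      (A.submatrix id (Fin.cons (s c) (Fin.cons w s) : Fin (m + 2) → α)).det = 0 :=
    Matrix.det_zero_of_column_eq (Fin.succ_ne_zero c.succ).symm fun _ => by simp
  rw [plucker_exchange _ _ _ 0, Fin.sum_univ_succ, Fin.sum_univ_succ]
  simp only [← Fin.cons_update, Fin.update_cons_zero, Fin.cons_zero, Fin.cons_succ,
    repeated_column, mul_zero, Finset.sum_const_zero, add_zero]

end Exchange

section OrderSign

variable {α : Type*} [LinearOrder α]

/-- The factor `±1` counting the parity of the terms of `f` that do not exceed `a`: the sign of
moving `a` from the front of an increasing tuple `f` to its sorted position when `a` is not a term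
of `f`. -/
def frontSign {k : ℕ} (a : α) (f : Fin k → α) : ℤˣ :=
  ∏ c, if a < f c then 1 else -1

/-- The sign of the permutation sorting a tuple `f` with distinct terms, encoded as the parity of
the number of its inversions. Repeated terms are counted as inversions. -/
def orderSign {k : ℕ} (f : Fin k → α) : ℤˣ :=
  ∏ i, ∏ j ∈ Finset.Ioi i, if f i < f j then 1 else -1

lemma orderSign_cons {k : ℕ} (a : α) (f : Fin k → α) :
    orderSign (Fin.cons a f : Fin (k + 1) → α) = frontSign a f * orderSign f := by
  simp [orderSign, frontSign, Fin.prod_univ_succ, Fin.prod_Ioi_succ]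

lemma frontSign_cons_of_lt {k : ℕ} {a b : α} (hab : a < b) (f : Fin k → α) :
    frontSign a (Fin.cons b f : Fin (k + 1) → α) = frontSign a f := by
  simp [frontSign, Fin.prod_univ_succ, hab]

lemma orderSign_comp_perm_of_strictMono {k : ℕ} {f : Fin k → α} (hf : StrictMono f)
    (σ : Equiv.Perm (Fin k)) : orderSign (f ∘ σ) = Equiv.Perm.sign σ := by
  simp [orderSign, Equiv.Perm.sign_eq_prod_prod_Ioi, hf.lt_iff_lt]

lemma orderSign_eq_one_of_strictMono {k : ℕ} {f : Fin k → α} (hf : StrictMono f) :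
    orderSign f = 1 := by
  simpa using orderSign_comp_perm_of_strictMono hf 1

end OrderSign

section Minor

variable {k n : ℕ}

lemma minor_eq_det_of_strictMono (A : Matrix (Fin k) (Fin n) ℝ) {I : Finset (Fin n)}
    {f : Fin k → Fin n} (hf : StrictMono f) (hI : Set.range f = I) :
    minor A I = (A.submatrix id f).det := by
  have hcard : I.card = k := by
    rw [← Set.ncard_coe_finset, ← hI, Set.ncard_range_of_injective hf.injective, Nat.card_fin]
  have hf_eq : f = I.orderEmbOfFin hcard :=
    Finset.orderEmbOfFin_unique hcard
      (fun c => Finset.mem_coe.1 (hI ▸ Set.mem_range_self c)) hf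
  rw [minor, dif_pos hcard, hf_eq]
  rfl

lemma minor_eq_orderSign_mul_det (A : Matrix (Fin k) (Fin n) ℝ) {I : Finset (Fin n)}
    {f : Fin k → Fin n} (hf : Function.Injective f) (hI : Set.range f = I) :
    minor A I = orderSign f * (A.submatrix id f).det := by
  set σ := Tuple.sort f
  have hmono : StrictMono (f ∘ σ) :=
    (Tuple.monotone_sort f).strictMono_of_injective (hf.comp σ.injective)
  have hsign : orderSign f = Equiv.Perm.sign σ := by
    simpa [Function.comp_assoc] using orderSign_comp_perm_of_strictMono hmono σ⁻¹
  calc minor A I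
      = (A.submatrix id (f ∘ σ)).det :=
        minor_eq_det_of_strictMono A hmono (by rw [σ.surjective.range_comp, hI])
    _ = orderSign f * (A.submatrix id f).det := by
        rw [hsign, ← Matrix.det_permute', Matrix.submatrix_submatrix, Function.id_comp]

lemma minor_insert_insert (A : Matrix (Fin (k + 2)) (Fin n) ℝ) {S : Finset (Fin n)}
    (hS : S.card = k) {a b : Fin n} (hab : a < b) (ha : a ∉ S) (hb : b ∉ S) :
    minor A (insert a (insert b S)) =
      frontSign a (S.orderEmbOfFin hS) * frontSign b (S.orderEmbOfFin hS) *
        (A.submatrix id (Fin.cons a (Fin.cons b (S.orderEmbOfFin hS)))).det := by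
  set s := S.orderEmbOfFin hS
  have hrange : Set.range (Fin.cons a (Fin.cons b s) : Fin (k + 2) → Fin n) =
      (insert a (insert b S) : Finset (Fin n)) := by
    simp [Fin.range_cons, s]
  have hinj : Function.Injective (Fin.cons a (Fin.cons b s) : Fin (k + 2) → Fin n) := by
    simp [Fin.cons_injective_iff, Fin.range_cons, s, hab.ne, ha, hb,
      (S.orderEmbOfFin hS).injective]
  have hsign : orderSign (Fin.cons a (Fin.cons b s) : Fin (k + 2) → Fin n) =
      frontSign a s * frontSign b s := by
    rw [orderSign_cons, orderSign_cons, frontSign_cons_of_lt hab,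
      orderSign_eq_one_of_strictMono s.strictMono, mul_one]
  rw [minor_eq_orderSign_mul_det A hinj hrange, hsign]
  push_cast
  rfl

lemma minor_three_term (A : Matrix (Fin (k + 2)) (Fin n) ℝ) {S : Finset (Fin n)}
    (hS : S.card = k) {h i j l : Fin n} (hhi : h < i) (hij : i < j) (hjl : j < l)
    (hSh : h ∉ S) (hSi : i ∉ S) (hSj : j ∉ S) (hSl : l ∉ S) :
    minor A (insert h (insert j S)) * minor A (insert i (insert l S)) =
      minor A (insert h (insert l S)) * minor A (insert i (insert j S)) +
        minor A (insert h (insert i S)) * minor A (insert j (insert l S)) := by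
  rw [minor_insert_insert A hS (hhi.trans hij) hSh hSj,
    minor_insert_insert A hS (hij.trans hjl) hSi hSl,
    minor_insert_insert A hS (hhi.trans (hij.trans hjl)) hSh hSl,
    minor_insert_insert A hS hij hSi hSj,
    minor_insert_insert A hS hhi hSh hSi,
    minor_insert_insert A hS hjl hSj hSl]
  set s := S.orderEmbOfFin hS
  linear_combination (frontSign h s * frontSign i s * frontSign j s * frontSign l s : ℝ) *
    plucker_three_term A s h j i l

end Minor

/-- if `A` is totally nonnegative, `h < i < j < ℓ`, `S` is a `(k−2)`-subset
disjoint from `{h,i,j,ℓ}`, and `Δ_{S∪{h,j}}(A) = 0` or `Δ_{S∪{i,ℓ}}(A) = 0`, then both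
`Δ_{S∪{h,ℓ}}(A) Δ_{S∪{i,j}}(A) = 0` and `Δ_{S∪{h,i}}(A) Δ_{S∪{j,ℓ}}(A) = 0`
(so Case 3 of the X-crossing theorem is impossible on the totally nonnegative
Grassmannian when all four incident Plücker coordinates are nonzero). -/
theorem case3_impossible_tnn {k n : ℕ} (hk : 2 ≤ k)
    (A : Matrix (Fin k) (Fin n) ℝ)
    (hnonneg : ∀ I : Finset (Fin n), 0 ≤ minor A I)
    (h i j l : Fin n) (hhi : h < i) (hij : i < j) (hjl : j < l)
    (S : Finset (Fin n)) (hS : S.card = k - 2)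
    (hSh : h ∉ S) (hSi : i ∉ S) (hSj : j ∉ S) (hSl : l ∉ S)
    (hzero : minor A (insert h (insert j S)) = 0 ∨ minor A (insert i (insert l S)) = 0) :
    minor A (insert h (insert l S)) * minor A (insert i (insert j S)) = 0 ∧
    minor A (insert h (insert i S)) * minor A (insert j (insert l S)) = 0 := by
  obtain ⟨m, rfl⟩ := Nat.exists_eq_add_of_le' hk
  have sum_eq_zero :
      minor A (insert h (insert l S)) * minor A (insert i (insert j S)) +
        minor A (insert h (insert i S)) * minor A (insert j (insert l S)) = 0 := by
    rw [← minor_three_term A hS hhi hij hjl hSh hSi hSj hSl]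
    exact mul_eq_zero.2 hzero
  exact (add_eq_zero_iff_of_nonneg (mul_nonneg (hnonneg _) (hnonneg _))
    (mul_nonneg (hnonneg _) (hnonneg _))).1 sum_eq_zero
end

section
/- Let n ≥ 3 and let I_3 ⊂ I_4 ⊂ ⋯ ⊂ I_n = {1, …, n} be a chain of subsets with |I_ℓ| = ℓ for each ℓ and with 1, n ∈ I_3. Define collections D_ℓ of 2-element subsets of {1, …, n} recursively: D_3 consists of the three 2-element subsets of I_3; and if I_{ℓ+1} = I_ℓ ∪ {m}, let j_s = max{ j ∈ I_ℓ : j < m } and j_{s+1} = min{ j ∈ I_ℓ : j > m } and set D_{ℓ+1} = D_ℓ ∪ { {j_s, m}, {m, j_{s+1}} }. Then D_n has exactly 2n − 3 elements; D_n contains {p, p+1} for every 1 ≤ p ≤ n−1 as well as {1, n}; and D_n is noncrossing, i.e. there are no a < b < c < d with {a,c} ∈ D_n and {b,d} ∈ D_n. Consequently D_n consists of the n boundary edges together with the n − 3 diagonals of a triangulation of a convex n-gon with vertices labeled 1, …, n in order. -/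
open scoped BigOperators

/-!
Adding `m` to the vertex set of a triangulated polygon, strictly between the neighbouring vertices
`a < m < b`, glues the ear `a m b` onto the side `{a, b}`: that side becomes a diagonal and is
replaced by the two new sides `{a, m}` and `{m, b}`. A side crosses no chord of the polygon, so no
crossing appears, and each ear adds one vertex and two edges. Since the first vertex set of the flag
contains the two extreme vertices, every later vertex lies strictly between two earlier ones.
-/

section Polygon

variable {α : Type*} [LinearOrder α] {S : Finset α} {E : Finset (Finset α)} {a b m p q x : α}

lemma pair_eq_pair_iff_of_lt (hab : a < b) (hpq : p < q) :
    ({a, b} : Finset α) = {p, q} ↔ a = p ∧ b = q := by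
  rw [← Finset.coe_inj, Finset.coe_pair, Finset.coe_pair, Set.pair_eq_pair_iff]
  exact or_iff_left fun ⟨haq, hbp⟩ => hab.not_gt (haq ▸ hbp ▸ hpq)

lemma exists_isGreatest_lt (hx : x ∈ S) (hxm : x < m) :
    ∃ a, IsGreatest {j ∈ S | j < m} a := by
  have hne : (S.filter (· < m)).Nonempty := ⟨x, Finset.mem_filter.2 ⟨hx, hxm⟩⟩
  exact ⟨_, by simpa only [Finset.coe_filter] using Finset.isGreatest_max' _ hne⟩

lemma exists_isLeast_gt (hx : x ∈ S) (hmx : m < x) :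
    ∃ b, IsLeast {j ∈ S | m < j} b :=
  exists_isGreatest_lt (α := αᵒᵈ) hx hmx

/-- `{a, b}`, with `a < b`, is a side of the convex polygon whose vertices are the elements of `S`
in cyclic order: one of the two arcs between `a` and `b` contains no other vertex. -/
def IsPolygonSide (S : Finset α) (a b : α) : Prop :=
  a ∈ S ∧ b ∈ S ∧ a < b ∧ (Disjoint (S : Set α) (Set.Ioo a b) ∨ (S : Set α) ⊆ Set.Icc a b)

/-- No two chords in `E` cross, a chord being encoded as the pair of its endpoints and vertices
being placed on a circle in increasing order. -/
def IsNoncrossing (E : Finset (Finset α)) : Prop :=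
  ∀ a b c d : α, a < b → b < c → c < d → {a, c} ∈ E → {b, d} ∈ E → False

/-- `E` consists of the sides and the diagonals of a triangulation of the convex polygon with
vertex set `S`. Maximality of the set of diagonals is encoded by the number of edges, `2 |S| - 3`,
written without subtraction. -/
structure IsPolygonTriangulation (S : Finset α) (E : Finset (Finset α)) : Prop where
  subset_powersetCard : E ⊆ S.powersetCard 2
  card_add_three : E.card + 3 = 2 * S.card
  side_mem : ∀ a b, IsPolygonSide S a b → {a, b} ∈ E
  noncrossing : IsNoncrossing E

lemma pair_mem_powersetCard_two (ha : a ∈ S) (hb : b ∈ S) (hab : a < b) :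
    {a, b} ∈ S.powersetCard 2 :=
  Finset.mem_powersetCard.2
    ⟨Finset.insert_subset ha (Finset.singleton_subset_iff.2 hb), Finset.card_pair hab.ne⟩

lemma isPolygonSide_Icc_of_covBy [LocallyFiniteOrder α] (hpq : p ⋖ q) (hap : a ≤ p) (hqb : q ≤ b) :
    IsPolygonSide (Finset.Icc a b) p q :=
  ⟨Finset.mem_Icc.2 ⟨hap, hpq.le.trans hqb⟩, Finset.mem_Icc.2 ⟨hap.trans hpq.le, hqb⟩, hpq.lt,
    Or.inl (hpq.Ioo_eq ▸ Set.disjoint_empty _)⟩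

lemma isPolygonSide_Icc_endpoints [LocallyFiniteOrder α] (hab : a < b) :
    IsPolygonSide (Finset.Icc a b) a b :=
  ⟨Finset.left_mem_Icc.2 hab.le, Finset.right_mem_Icc.2 hab.le, hab,
    Or.inr (Finset.coe_Icc a b).subset⟩

lemma isPolygonSide_insert_of_isGreatest (ha : IsGreatest {j ∈ S | j < m} a) :
    IsPolygonSide (insert m S) a m := by
  refine ⟨Finset.mem_insert_of_mem ha.1.1, Finset.mem_insert_self m S, ha.1.2, Or.inl ?_⟩
  rw [Set.disjoint_left]
  rintro x hx ⟨hax, hxm⟩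
  exact hax.not_ge (ha.2 ⟨Finset.mem_of_mem_insert_of_ne hx hxm.ne, hxm⟩)

lemma isPolygonSide_insert_of_isLeast (hb : IsLeast {j ∈ S | m < j} b) :
    IsPolygonSide (insert m S) m b := by
  refine ⟨Finset.mem_insert_self m S, Finset.mem_insert_of_mem hb.1.1, hb.1.2, Or.inl ?_⟩
  rw [Set.disjoint_left]
  rintro x hx ⟨hmx, hxb⟩
  exact hxb.not_ge (hb.2 ⟨Finset.mem_of_mem_insert_of_ne hx hmx.ne', hmx⟩)

lemma IsPolygonSide.of_insert (h : IsPolygonSide (insert m S) p q) (hp : p ∈ S) (hq : q ∈ S) :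
    IsPolygonSide S p q := by
  have hS : (S : Set α) ⊆ ↑(insert m S) := Finset.coe_subset.2 (Finset.subset_insert m S)
  exact ⟨hp, hq, h.2.2.1, h.2.2.2.imp (·.mono_left hS) hS.trans⟩

lemma IsPolygonSide.eq_or_eq_or_of_insert (h : IsPolygonSide (insert m S) p q)
    (ha : IsGreatest {j ∈ S | j < m} a) (hb : IsLeast {j ∈ S | m < j} b) :
    p = a ∧ q = m ∨ p = m ∧ q = b ∨ IsPolygonSide S p q := by
  have haS : a ∈ insert m S := Finset.mem_insert_of_mem ha.1.1
  have hbS : b ∈ insert m S := Finset.mem_insert_of_mem hb.1.1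
  have ⟨hp, hq, hpq, hside⟩ := h
  rcases Finset.mem_insert.1 hp with rfl | hpS
  · have hqS : q ∈ S := Finset.mem_of_mem_insert_of_ne hq hpq.ne'
    rcases hside with hgap | hspan
    · have hqb : q ≤ b := not_lt.1 fun hbq => Set.disjoint_left.1 hgap hbS ⟨hb.1.2, hbq⟩
      exact Or.inr (Or.inl ⟨rfl, hqb.antisymm (hb.2 ⟨hqS, hpq⟩)⟩)
    · exact absurd (hspan haS).1 ha.1.2.not_ge
  rcases Finset.mem_insert.1 hq with rfl | hqS
  · rcases hside with hgap | hspan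
    · have hap : a ≤ p := not_lt.1 fun hpa => Set.disjoint_left.1 hgap haS ⟨hpa, ha.1.2⟩
      exact Or.inl ⟨(ha.2 ⟨hpS, hpq⟩).antisymm hap, rfl⟩
    · exact absurd (hspan hbS).2 hb.1.2.not_ge
  · exact Or.inr (Or.inr (h.of_insert hpS hqS))

lemma IsNoncrossing.insert_side (hE : IsNoncrossing E) (hES : ∀ e ∈ E, e ⊆ S)
    (hab : IsPolygonSide S a b) : IsNoncrossing (insert {a, b} E) := by
  obtain ⟨ha, hb, hlt, hside⟩ := hab
  have hES' : ∀ e ∈ insert {a, b} E, e ⊆ S := Finset.forall_mem_insert .. |>.2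
    ⟨Finset.insert_subset ha (Finset.singleton_subset_iff.2 hb), hES⟩
  intro p q r s hpq hqr hrs hpr hqs
  have hp : p ∈ S := hES' _ hpr (by simp)
  have hq : q ∈ S := hES' _ hqs (by simp)
  have hr : r ∈ S := hES' _ hpr (by simp)
  have hs : s ∈ S := hES' _ hqs (by simp)
  rcases Finset.mem_insert.1 hpr with hpr | hpr
  · obtain ⟨rfl, rfl⟩ := (pair_eq_pair_iff_of_lt (hpq.trans hqr) hlt).1 hpr
    rcases hside with hgap | hspan
    · exact Set.disjoint_left.1 hgap hq ⟨hpq, hqr⟩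
    · exact hrs.not_ge (hspan hs).2
  rcases Finset.mem_insert.1 hqs with hqs | hqs
  · obtain ⟨rfl, rfl⟩ := (pair_eq_pair_iff_of_lt (hqr.trans hrs) hlt).1 hqs
    rcases hside with hgap | hspan
    · exact Set.disjoint_left.1 hgap hr ⟨hqr, hrs⟩
    · exact hpq.not_ge (hspan hp).1
  · exact hE p q r s hpq hqr hrs hpr hqs

lemma isNoncrossing_powersetCard_two (hS : S.card ≤ 3) : IsNoncrossing (S.powersetCard 2) := by
  intro a b c d hab hbc hcd hac hbd
  simp only [Finset.mem_powersetCard, Finset.insert_subset_iff, Finset.singleton_subset_iff]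
    at hac hbd
  have hsub : {a, b, c, d} ⊆ S := by
    simp only [Finset.insert_subset_iff, Finset.singleton_subset_iff]
    exact ⟨hac.1.1, hbd.1.1, hac.1.2, hbd.1.2⟩
  have hcard : ({a, b, c, d} : Finset α).card = 4 :=
    Finset.card_eq_succ.2 ⟨a, {b, c, d}, by
      simp [hab.ne, (hab.trans hbc).ne, (hab.trans (hbc.trans hcd)).ne], rfl,
      Finset.card_eq_three.2 ⟨b, c, d, hbc.ne, (hbc.trans hcd).ne, hcd.ne, rfl⟩⟩
  have := Finset.card_le_card hsub
  omega

lemma isPolygonTriangulation_powersetCard_two (hS : S.card = 3) :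
    IsPolygonTriangulation S (S.powersetCard 2) where
  subset_powersetCard := Finset.Subset.rfl
  card_add_three := by simp [hS]
  side_mem _ _ h := pair_mem_powersetCard_two h.1 h.2.1 h.2.2.1
  noncrossing := isNoncrossing_powersetCard_two hS.le

lemma IsPolygonTriangulation.subset_of_mem (h : IsPolygonTriangulation S E) {e : Finset α}
    (he : e ∈ E) : e ⊆ S :=
  (Finset.mem_powersetCard.1 (h.subset_powersetCard he)).1

lemma IsPolygonTriangulation.card_insert_ear (h : IsPolygonTriangulation S E) (hm : m ∉ S)
    (ham : a < m) (hmb : m < b) : (insert {a, m} (insert {m, b} E)).card = E.card + 2 := by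
  have notMem_of_mem {e : Finset α} (hme : m ∈ e) : e ∉ E := fun he => hm (h.subset_of_mem he hme)
  have hne : ({a, m} : Finset α) ≠ {m, b} := fun heq =>
    ham.ne ((pair_eq_pair_iff_of_lt ham hmb).1 heq).1
  rw [Finset.card_insert_of_notMem, Finset.card_insert_of_notMem (notMem_of_mem (by simp))]
  exact Finset.mem_insert.not.2 (not_or.2 ⟨hne, notMem_of_mem (by simp)⟩)

lemma IsPolygonTriangulation.insert_ear (h : IsPolygonTriangulation S E) (hm : m ∉ S)
    (ha : IsGreatest {j ∈ S | j < m} a) (hb : IsLeast {j ∈ S | m < j} b) :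
    IsPolygonTriangulation (insert m S) (insert {a, m} (insert {m, b} E)) := by
  have ham := isPolygonSide_insert_of_isGreatest ha
  have hmb := isPolygonSide_insert_of_isLeast hb
  have hsub : insert {m, b} E ⊆ (insert m S).powersetCard 2 :=
    Finset.insert_subset (pair_mem_powersetCard_two hmb.1 hmb.2.1 hmb.2.2.1)
      (h.subset_powersetCard.trans (Finset.powersetCard_mono (Finset.subset_insert m S)))
  refine ⟨Finset.insert_subset (pair_mem_powersetCard_two ham.1 ham.2.1 ham.2.2.1) hsub, ?_, ?_, ?_⟩
  · rw [h.card_insert_ear hm ha.1.2 hb.1.2, Finset.card_insert_of_notMem hm]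
    have := h.card_add_three
    omega
  · intro p q hpq
    rcases hpq.eq_or_eq_or_of_insert ha hb with ⟨rfl, rfl⟩ | ⟨rfl, rfl⟩ | hpq
    · simp
    · simp
    · simp [h.side_mem p q hpq]
  · refine (h.noncrossing.insert_side ?_ hmb).insert_side ?_ ham
    · exact fun e he => (h.subset_of_mem he).trans (Finset.subset_insert m S)
    · exact fun e he => (Finset.mem_powersetCard.1 (hsub he)).1

end Polygon

theorem flag_of_exponentials_gives_triangulation_general {α : Type*} [LinearOrder α] {k n : ℕ}
    (hkn : k ≤ n) {I : ℕ → Finset α} (hflag : ∀ ℓ, k ≤ ℓ → ℓ < n → I ℓ ⋖ I (ℓ + 1))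
    {lo hi : α} (hlo : lo ∈ I k) (hhi : hi ∈ I k) (hIn : (I n : Set α) ⊆ Set.Icc lo hi)
    {D : ℕ → Finset (Finset α)} (hDk : IsPolygonTriangulation (I k) (D k))
    (hstep : ∀ ℓ, k ≤ ℓ → ℓ < n → ∀ m a b, m ∈ I (ℓ + 1) → m ∉ I ℓ →
      IsGreatest {j ∈ I ℓ | j < m} a → IsLeast {j ∈ I ℓ | m < j} b →
      D (ℓ + 1) = insert {a, m} (insert {m, b} (D ℓ))) :
    IsPolygonTriangulation (I n) (D n) := by
  have hmono : MonotoneOn I (Set.Icc k n) :=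
    monotoneOn_of_le_succ Set.ordConnected_Icc fun ℓ _ hℓ hℓ' => (hflag ℓ hℓ.1 hℓ'.2).le
  suffices ∀ ℓ, k ≤ ℓ → ℓ ≤ n → IsPolygonTriangulation (I ℓ) (D ℓ) from this n hkn le_rfl
  intro ℓ hkℓ
  induction ℓ, hkℓ using Nat.le_induction with
  | base => exact fun _ => hDk
  | succ ℓ hkℓ ih =>
    intro hℓn
    obtain ⟨m, hm, hIm⟩ := (hflag ℓ hkℓ hℓn).exists_finset_insert
    have hmI : m ∈ I (ℓ + 1) := hIm ▸ Finset.mem_insert_self m (I ℓ)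
    have hIk : I k ⊆ I ℓ := hmono ⟨le_rfl, hkn⟩ ⟨hkℓ, by omega⟩ hkℓ
    have hIℓ : I (ℓ + 1) ⊆ I n := hmono ⟨by omega, hℓn⟩ ⟨hkn, le_rfl⟩ hℓn
    have hbounds : lo ≤ m ∧ m ≤ hi := hIn (hIℓ hmI)
    obtain ⟨a, ha⟩ := exists_isGreatest_lt (hIk hlo)
      (hbounds.1.lt_of_ne (ne_of_mem_of_not_mem (hIk hlo) hm))
    obtain ⟨b, hb⟩ := exists_isLeast_gt (hIk hhi)
      (hbounds.2.lt_of_ne (ne_of_mem_of_not_mem (hIk hhi) hm).symm)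
    rw [hstep ℓ hkℓ hℓn m a b hmI hm ha hb, ← hIm]
    exact (ih (by omega)).insert_ear hm ha hb

/-- let `n ≥ 3` and `I 3 ⊂ I 4 ⊂ ⋯ ⊂ I n = {1,…,n}` be a flag of subsets
with `|I ℓ| = ℓ` and `1, n ∈ I 3`.  Define `D 3` to be the three 2-subsets of `I 3`, and if
`I (ℓ+1) = I ℓ ∪ {m}` with `j_s = max{j ∈ I ℓ : j < m}` and `j_{s+1} = min{j ∈ I ℓ : j > m}`,
set `D (ℓ+1) = D ℓ ∪ {{j_s, m}, {m, j_{s+1}}}`.  Then `D n` has exactly `2n − 3` elements,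
contains every boundary edge `{p, p+1}` (`1 ≤ p ≤ n−1`) as well as `{1, n}`, and is
noncrossing; hence `D n` consists of the boundary edges and the `n − 3` diagonals of a
triangulation of a convex `n`-gon. -/
theorem flag_of_exponentials_gives_triangulation {n : ℕ} (hn : 3 ≤ n)
    (I : ℕ → Finset ℕ)
    (hcard : ∀ ℓ, 3 ≤ ℓ → ℓ ≤ n → (I ℓ).card = ℓ)
    (hchain : ∀ ℓ, 3 ≤ ℓ → ℓ < n → I ℓ ⊆ I (ℓ + 1))
    (hIn : I n = Finset.Icc 1 n)
    (h1 : 1 ∈ I 3) (hn3 : n ∈ I 3)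
    (D : ℕ → Finset (Finset ℕ))
    (hD3 : D 3 = Finset.powersetCard 2 (I 3))
    (hstep : ∀ ℓ, 3 ≤ ℓ → ℓ < n → ∀ m js js1 : ℕ,
      m ∈ I (ℓ + 1) → m ∉ I ℓ →
      js ∈ I ℓ → js < m → (∀ j ∈ I ℓ, j < m → j ≤ js) →
      js1 ∈ I ℓ → m < js1 → (∀ j ∈ I ℓ, m < j → js1 ≤ j) →
      D (ℓ + 1) = insert {js, m} (insert {m, js1} (D ℓ))) :
    (D n).card = 2 * n - 3 ∧
    (∀ p : ℕ, 1 ≤ p → p ≤ n - 1 → ({p, p + 1} : Finset ℕ) ∈ D n) ∧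
    ({1, n} : Finset ℕ) ∈ D n ∧
    (∀ a b c d : ℕ, a < b → b < c → c < d →
      ({a, c} : Finset ℕ) ∈ D n → ({b, d} : Finset ℕ) ∈ D n → False) := by
  have hflag (ℓ : ℕ) (h3 : 3 ≤ ℓ) (hℓ : ℓ < n) : I ℓ ⋖ I (ℓ + 1) :=
    Finset.covBy_iff_exists_insert.2 <| Finset.exists_eq_insert_iff.2
      ⟨hchain ℓ h3 hℓ, by rw [hcard ℓ h3 hℓ.le, hcard (ℓ + 1) (by omega) hℓ]⟩
  have hT : IsPolygonTriangulation (I n) (D n) :=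
    flag_of_exponentials_gives_triangulation_general hn hflag h1 hn3 (by simp [hIn])
      (hD3 ▸ isPolygonTriangulation_powersetCard_two (hcard 3 le_rfl hn))
      fun ℓ h3 hℓ m a b hm hm' ha hb => hstep ℓ h3 hℓ m a b hm hm'
        ha.1.1 ha.1.2 (fun _ hj hjm => ha.2 ⟨hj, hjm⟩) hb.1.1 hb.1.2 fun _ hj hmj => hb.2 ⟨hj, hmj⟩
  rw [hIn] at hT
  have hsize : (D n).card + 3 = 2 * n := by simpa using hT.card_add_three
  exact ⟨by omega,
    fun p hp hpn => hT.side_mem _ _ <|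
      isPolygonSide_Icc_of_covBy (Order.covBy_add_one p) hp (by omega),
    hT.side_mem _ _ (isPolygonSide_Icc_endpoints (by omega)), hT.noncrossing⟩
end
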